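/- For every ε > 0 there exists k_0 such that for all integers k ≥ k_0, the k-colour list Ramsey number of the triangle satisfies R_ℓ(K_3, k) ≤ (4 + ε)^k. -/

import Mathlib

/-- A colouring `c` of the edges of the complete graph on `Fin n` contains a
monochromatic copy of the graph `G`. -/
def HasMonoCopy {α β : Type*} (G : SimpleGraph α) {n : ℕ} (c : Sym2 (Fin n) → β) : Prop :=
  ∃ (f : α → Fin n) (x : β), Function.Injective f ∧
    ∀ a b, G.Adj a b → c s(f a, f b) = x

/-- The `k`-colour list Ramsey number of a graph `G`: the least `n` for which one can
assign a list of `k` colours to each edge of `K_n` so that every colouring of the edges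
from these lists contains a monochromatic copy of `G`. -/
noncomputable def listRamsey {α : Type*} (G : SimpleGraph α) (k : ℕ) : ℕ :=
  sInf { n : ℕ | ∃ L : Sym2 (Fin n) → Finset ℕ,
    (∀ e : Sym2 (Fin n), ¬ e.IsDiag → (L e).card = k) ∧
    ∀ c : Sym2 (Fin n) → ℕ, (∀ e : Sym2 (Fin n), ¬ e.IsDiag → c e ∈ L e) →
      HasMonoCopy G c }

section Containers

open Finset

/-- A greedy process whose potential drops by at least `g` at every heavy step has few reachable
states, and every set `I` steers it to a state at which no element of `I` is heavy. -/
theorem exists_greedy_family {S E : Type*} [Fintype E] (step : S → E → S)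
    (heavy : S → E → Prop) (Inv : S → Prop) (R : Finset E → S → Prop) (φ : S → ℕ) (g : ℕ)
    (hg : 0 < g) (hInv : ∀ s f, Inv s → heavy s f → Inv (step s f))
    (hφ : ∀ s f, Inv s → heavy s f → φ (step s f) + g ≤ φ s)
    (hR : ∀ I s f, f ∈ I → R I s → heavy s f → R I (step s f)) (m : ℕ) :
    ∀ s, Inv s → φ s ≤ g * m → ∃ F : Finset S, F.card ≤ (Fintype.card E + 1) ^ m ∧
      (∀ t ∈ F, Inv t) ∧ ∀ I, R I s → ∃ t ∈ F, R I t ∧ ∀ f ∈ I, ¬ heavy t f := by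
  classical
  induction m with
  | zero =>
    intro s hs h0
    refine ⟨{s}, by simp, by simpa using hs, fun I hI => ⟨s, by simp, hI, fun f _ hf => ?_⟩⟩
    have := hφ s f hs hf
    omega
  | succ m ih =>
    intro s hs hm
    have key : ∀ f : E, ∃ F : Finset S, F.card ≤ (Fintype.card E + 1) ^ m ∧
        (∀ t ∈ F, Inv t) ∧ (heavy s f → ∀ I, R I (step s f) →
          ∃ t ∈ F, R I t ∧ ∀ f ∈ I, ¬ heavy t f) := by
      intro f
      by_cases hf : heavy s f
      · obtain ⟨F, h1, h2, h3⟩ := ih (step s f) (hInv s f hs hf) (by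
          have := hφ s f hs hf
          rw [Nat.mul_succ] at hm
          omega)
        exact ⟨F, h1, h2, fun _ => h3⟩
      · exact ⟨∅, by simp, by simp, fun h => absurd h hf⟩
    choose F h1 h2 h3 using key
    refine ⟨insert s (univ.biUnion F), ?_, ?_, ?_⟩
    · calc (insert s (univ.biUnion F)).card ≤ (univ.biUnion F).card + 1 := card_insert_le _ _
        _ ≤ Fintype.card E * (Fintype.card E + 1) ^ m + 1 := by
          gcongr
          exact card_biUnion_le_card_mul _ _ _ fun f _ => h1 f
        _ ≤ (Fintype.card E + 1) ^ (m + 1) := by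
          have : 1 ≤ (Fintype.card E + 1) ^ m := Nat.one_le_pow _ _ (by omega)
          rw [pow_succ]
          nlinarith
    · intro t ht
      rcases mem_insert.1 ht with rfl | ht
      · exact hs
      · obtain ⟨f, -, hf⟩ := mem_biUnion.1 ht
        exact h2 f t hf
    · intro I hI
      by_cases h : ∃ f ∈ I, heavy s f
      · obtain ⟨f, hfI, hf⟩ := h
        obtain ⟨t, ht, h⟩ := h3 f hf I (hR I s f hfI hI hf)
        exact ⟨t, mem_insert_of_mem (mem_biUnion.2 ⟨f, mem_univ _, ht⟩), h⟩
      · push Not at h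
        exact ⟨s, mem_insert_self _ _, hI, h⟩

variable {V : Type*} [DecidableEq V]

/-- A set of ordered pairs invariant under reversal. -/
def IsSymmPairs (A : Finset (V × V)) : Prop := ∀ a b, (a, b) ∈ A → (b, a) ∈ A

/-- A set of ordered pairs containing no cyclic triangle. -/
def IsTriangleFreePairs (A : Finset (V × V)) : Prop :=
  ∀ a b c, (a, b) ∈ A → (b, c) ∈ A → (c, a) ∉ A

/-- The largest symmetric subset of `A`. -/
def symmPart (A : Finset (V × V)) : Finset (V × V) := A.filter fun e => (e.2, e.1) ∈ A

theorem isSymmPairs_symmPart (A : Finset (V × V)) : IsSymmPairs (symmPart A) := by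
  intro a b h
  simp only [symmPart, mem_filter] at h ⊢
  exact h.symm

theorem subset_symmPart {I A : Finset (V × V)} (hI : IsSymmPairs I) (h : I ⊆ A) :
    I ⊆ symmPart A := by
  rintro ⟨a, b⟩ hab
  exact mem_filter.2 ⟨h hab, h (hI a b hab)⟩

theorem symmPart_subset (A : Finset (V × V)) : symmPart A ⊆ A := filter_subset _ _

/-- The triples of `P` whose first two vertices form the pair `e`. -/
def outFiber (P : Finset (V × V × V)) (e : V × V) : Finset (V × V × V) :=
  P.filter fun x => (x.1, x.2.1) = e

/-- Deleting from `Y` all pairs linked to `f` by `P`. -/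
def deleteLinked (P : Finset (V × V × V)) (Y : Finset (V × V)) (f : V × V) : Finset (V × V) :=
  Y.filter fun e => ¬ (e.1 = f.2 ∧ (f.1, f.2, e.2) ∈ P)

theorem card_deleteLinked (P : Finset (V × V × V)) (Y : Finset (V × V)) (f : V × V) :
    (deleteLinked P Y f).card + ((outFiber P f).filter fun x => (x.2.1, x.2.2) ∈ Y).card =
      Y.card := by
  rw [add_comm, ← card_filter_add_card_filter_not (s := Y)
    (fun e => e.1 = f.2 ∧ (f.1, f.2, e.2) ∈ P)]
  congr 1
  refine card_bij (fun x _ => (x.2.1, x.2.2)) ?_ ?_ ?_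
  · rintro ⟨a, b, c⟩ h
    simp only [outFiber, mem_filter] at h ⊢
    obtain ⟨⟨h, rfl⟩, h'⟩ := h
    exact ⟨h', rfl, h⟩
  · rintro ⟨a, b, c⟩ h ⟨a', b', c'⟩ h'
    simp only [outFiber, mem_filter, Prod.ext_iff] at h h' ⊢
    grind
  · rintro ⟨b, c⟩ h
    simp only [mem_filter] at h
    obtain ⟨h, rfl, h'⟩ := h
    exact ⟨(f.1, f.2, c), by simp [outFiber, h, h'], rfl⟩

variable [Fintype V]

/-- The ordered triples spanning a cyclic triangle of `A`. -/
def trianglePairs (A : Finset (V × V)) : Finset (V × V × V) :=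
  univ.filter fun x => (x.1, x.2.1) ∈ A ∧ (x.2.1, x.2.2) ∈ A ∧ (x.2.2, x.1) ∈ A

/-- Goodman's bound: a symmetric set of more than `n² / 2` pairs spans many triangles. -/
theorem two_mul_card_sq_le {A : Finset (V × V)} (hA : IsSymmPairs A) :
    2 * A.card ^ 2 ≤
      Fintype.card V * (Fintype.card V * A.card + (trianglePairs A).card) := by
  set d : V → ℕ := fun a => (univ.filter fun b => (a, b) ∈ A).card with hd
  have hdeg : ∑ a, d a = A.card := by
    have := card_eq_sum_card_fiberwise (f := Prod.fst) (s := A) (t := univ) (by simp)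
    rw [this]
    refine sum_congr rfl fun a _ => ?_
    refine card_bij (fun b _ => (a, b)) (by simp) (by simp) ?_
    rintro ⟨x, y⟩ h
    simp only [mem_filter] at h
    obtain ⟨h, rfl⟩ := h
    exact ⟨y, by simpa using h, rfl⟩
  have hsq : ∑ e ∈ A, d e.1 = ∑ a, d a ^ 2 := by
    rw [← sum_fiberwise A Prod.fst]
    refine sum_congr rfl fun a _ => ?_
    rw [sum_congr rfl (g := fun _ => d a) (by
      intro x hx; rw [(mem_filter.1 hx).2]), sum_const, smul_eq_mul, sq]
    congr 1
    symm
    refine card_bij (fun b _ => (a, b)) (by simp) (by simp) ?_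
    rintro ⟨x, y⟩ h
    simp only [mem_filter] at h
    obtain ⟨h, rfl⟩ := h
    exact ⟨y, by simpa using h, rfl⟩
  have hswap : ∑ e ∈ A, d e.2 = ∑ e ∈ A, d e.1 :=
    sum_bij (fun e _ => (e.2, e.1)) (fun e he => hA _ _ he)
      (by rintro ⟨_, _⟩ _ ⟨_, _⟩ _ h; simp_all) (fun e he => ⟨(e.2, e.1), hA _ _ he, rfl⟩)
      (fun _ _ => rfl)
  have htri : (trianglePairs A).card =
      ∑ e ∈ A, (univ.filter fun c => (e.2, c) ∈ A ∧ (c, e.1) ∈ A).card := by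
    have := card_eq_sum_card_fiberwise (f := fun x : V × V × V => (x.1, x.2.1))
      (s := trianglePairs A) (t := A) (by
        intro x hx
        exact (mem_filter.1 hx).2.1)
    rw [this]
    refine sum_congr rfl fun e he => ?_
    symm
    refine card_bij (fun c _ => (e.1, e.2, c)) ?_ (by simp) ?_
    · intro c hc
      simpa [trianglePairs, he] using hc
    · rintro ⟨x, y, z⟩ h
      simp only [trianglePairs, mem_filter, mem_univ, true_and] at h
      obtain ⟨h, rfl⟩ := h
      exact ⟨z, by simpa using h.2, rfl⟩
  have hpair : ∀ e ∈ A, d e.1 + d e.2 ≤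
      Fintype.card V + (univ.filter fun c => (e.2, c) ∈ A ∧ (c, e.1) ∈ A).card := by
    intro e _
    have h := card_union_add_card_inter (univ.filter fun b => (e.1, b) ∈ A)
      (univ.filter fun b => (e.2, b) ∈ A)
    have h1 := card_le_univ ((univ.filter fun b => (e.1, b) ∈ A) ∪
      (univ.filter fun b => (e.2, b) ∈ A))
    have h2 : (univ.filter fun b => (e.1, b) ∈ A) ∩ (univ.filter fun b => (e.2, b) ∈ A) ⊆
        univ.filter fun c => (e.2, c) ∈ A ∧ (c, e.1) ∈ A := by
      intro c hc
      simp only [mem_inter, mem_filter, mem_univ, true_and] at hc ⊢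
      exact ⟨hc.2, hA _ _ hc.1⟩
    have h3 := card_le_card h2
    simp only [hd]
    omega
  have hsum := sum_le_sum hpair
  rw [sum_add_distrib, sum_add_distrib, hswap, hsq, ← htri, sum_const, smul_eq_mul] at hsum
  have hcs := sq_sum_le_card_mul_sum_sq (s := (univ : Finset V)) (f := d)
  rw [hdeg, card_univ] at hcs
  nlinarith

theorem card_le_of_card_trianglePairs_le {A : Finset (V × V)} (hA : IsSymmPairs A) {q : ℕ}
    (hq : 0 < q) (hT : q * (trianglePairs A).card ≤ 4 * Fintype.card V ^ 3) :
    2 * q * A.card ≤ (q + 8) * Fintype.card V ^ 2 := by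
  by_contra! h
  have h1 := two_mul_card_sq_le hA
  set n := Fintype.card V
  set x := A.card
  set T := (trianglePairs A).card
  have h2 : q * (2 * x ^ 2) ≤ n ^ 2 * (q * x) + 4 * n ^ 4 := by
    calc q * (2 * x ^ 2) ≤ q * (n * (n * x + T)) := by gcongr
      _ = n ^ 2 * (q * x) + n * (q * T) := by ring
      _ ≤ n ^ 2 * (q * x) + n * (4 * n ^ 3) := by gcongr
      _ = _ := by ring
  zify at *
  have h3 : (n : ℤ) ^ 2 ≤ 2 * x := by
    by_contra! h4
    have : 2 * (q : ℤ) * x ≤ q * n ^ 2 := by nlinarith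
    nlinarith [sq_nonneg (n : ℤ)]
  have h5 : (8 * (n : ℤ) ^ 2) < q * (2 * x - n ^ 2) := by linarith
  have hx : (0 : ℤ) < x := by
    by_contra! h6
    have : (x : ℤ) = 0 := by omega
    rw [this] at h5 h3
    nlinarith [sq_nonneg (n : ℤ)]
  have h7 := mul_lt_mul_of_pos_left h5 hx
  nlinarith [sq_nonneg (n : ℤ)]

/-- The triples of `P` whose last two vertices form the pair `e`. -/
def inFiber (P : Finset (V × V × V)) (e : V × V) : Finset (V × V × V) :=
  P.filter fun x => (x.2.1, x.2.2) = e

/-- The triples closed to a triangle by the pair `f` whose two other pairs lie in `A` and are not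
yet saturated in `P`. -/
def closing (A : Finset (V × V)) (D : ℕ) (P : Finset (V × V × V)) (f : V × V) :
    Finset (V × V × V) :=
  univ.filter fun x => (x.2.2, x.1) = f ∧ (x.1, x.2.1) ∈ A ∧ (x.2.1, x.2.2) ∈ A ∧
    (outFiber P (x.1, x.2.1)).card < D ∧ (inFiber P (x.2.1, x.2.2)).card < D

/-- A system of consecutive pairs of pairs in `A`, each pair being used at most `D` times in either
position. -/
structure IsLinkSystem (A : Finset (V × V)) (D : ℕ) (P : Finset (V × V × V)) : Prop where
  out_le : ∀ e, (outFiber P e).card ≤ D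
  in_le : ∀ e, (inFiber P e).card ≤ D
  out_mem : ∀ x ∈ P, (x.1, x.2.1) ∈ A
  in_mem : ∀ x ∈ P, (x.2.1, x.2.2) ∈ A

/-- The set `I` contains no two consecutive pairs linked by `P`. -/
def AvoidsLinks (I : Finset (V × V)) (P : Finset (V × V × V)) : Prop :=
  ∀ x ∈ P, (x.1, x.2.1) ∈ I → (x.2.1, x.2.2) ∉ I

theorem IsLinkSystem.union_closing {A : Finset (V × V)} {D : ℕ} {P : Finset (V × V × V)}
    (hP : IsLinkSystem A D P) (f : V × V) : IsLinkSystem A D (P ∪ closing A D P f) := by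
  refine ⟨fun e => ?_, fun e => ?_, fun x hx => ?_, fun x hx => ?_⟩
  · by_cases h : ∃ x ∈ closing A D P f, (x.1, x.2.1) = e
    · obtain ⟨x, hx, rfl⟩ := h
      have hlt := (mem_filter.1 hx).2.2.2.2.1
      have hone : (outFiber (closing A D P f) (x.1, x.2.1)).card ≤ 1 := by
        refine card_le_one.2 ?_
        rintro ⟨a, b, c⟩ h ⟨a', b', c'⟩ h'
        simp only [outFiber, closing, mem_filter, Prod.ext_iff] at h h'
        grind
      have hsub : outFiber (P ∪ closing A D P f) (x.1, x.2.1) =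
          outFiber P (x.1, x.2.1) ∪ outFiber (closing A D P f) (x.1, x.2.1) :=
        filter_union _ _ _
      have := card_union_le (outFiber P (x.1, x.2.1))
        (outFiber (closing A D P f) (x.1, x.2.1))
      rw [hsub]
      omega
    · refine (card_le_card fun x hx => ?_).trans (hP.out_le e)
      simp only [outFiber, mem_filter, mem_union] at hx ⊢
      exact ⟨hx.1.resolve_right fun h' => h ⟨x, h', hx.2⟩, hx.2⟩
  · by_cases h : ∃ x ∈ closing A D P f, (x.2.1, x.2.2) = e
    · obtain ⟨x, hx, rfl⟩ := h
      have hlt := (mem_filter.1 hx).2.2.2.2.2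
      have hone : (inFiber (closing A D P f) (x.2.1, x.2.2)).card ≤ 1 := by
        refine card_le_one.2 ?_
        rintro ⟨a, b, c⟩ h ⟨a', b', c'⟩ h'
        simp only [inFiber, closing, mem_filter, Prod.ext_iff] at h h'
        grind
      have hsub : inFiber (P ∪ closing A D P f) (x.2.1, x.2.2) =
          inFiber P (x.2.1, x.2.2) ∪ inFiber (closing A D P f) (x.2.1, x.2.2) :=
        filter_union _ _ _
      have := card_union_le (inFiber P (x.2.1, x.2.2))
        (inFiber (closing A D P f) (x.2.1, x.2.2))
      rw [hsub]
      omega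
    · refine (card_le_card fun x hx => ?_).trans (hP.in_le e)
      simp only [inFiber, mem_filter, mem_union] at hx ⊢
      exact ⟨hx.1.resolve_right fun h' => h ⟨x, h', hx.2⟩, hx.2⟩
  · rcases mem_union.1 hx with hx | hx
    · exact hP.out_mem x hx
    · exact (mem_filter.1 hx).2.2.1
  · rcases mem_union.1 hx with hx | hx
    · exact hP.in_mem x hx
    · exact (mem_filter.1 hx).2.2.2.1

theorem IsLinkSystem.card_le {A : Finset (V × V)} {D : ℕ} {P : Finset (V × V × V)}
    (hP : IsLinkSystem A D P) : P.card ≤ D * Fintype.card V ^ 2 := by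
  have := card_le_mul_card_image_of_maps_to (f := fun x : V × V × V => (x.1, x.2.1)) (s := P)
    (t := univ) (fun _ _ => mem_univ _) D (fun e _ => hP.out_le e)
  rwa [card_univ, Fintype.card_prod, ← sq] at this

theorem exists_linkSystem_family (A : Finset (V × V)) {D q g : ℕ} (hg : 0 < g)
    (hn : Fintype.card V = q * g) :
    ∃ F : Finset (Finset (V × V × V)),
      F.card ≤ (Fintype.card V ^ 2 + 1) ^ (q * Fintype.card V * D) ∧
      (∀ P ∈ F, IsLinkSystem A D P) ∧
      ∀ I, IsTriangleFreePairs I → ∃ P ∈ F, AvoidsLinks I P ∧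
        ∀ f ∈ I, (closing A D P f \ P).card < g := by
  have key := exists_greedy_family (S := Finset (V × V × V)) (E := V × V)
    (step := fun P f => P ∪ closing A D P f)
    (heavy := fun P f => g ≤ (closing A D P f \ P).card) (Inv := IsLinkSystem A D)
    (R := fun I P => IsTriangleFreePairs I ∧ AvoidsLinks I P)
    (φ := fun P => D * Fintype.card V ^ 2 - P.card) (g := g) hg
    (fun P f hP _ => hP.union_closing f)
    (fun P f hP hf => by
      have h1 := (hP.union_closing f).card_le
      have h2 : (P ∪ closing A D P f).card = P.card + (closing A D P f \ P).card := by
        rw [union_comm, ← sdiff_union_self_eq_union, card_union_of_disjoint sdiff_disjoint,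
          add_comm]
      omega)
    (fun I P f hf hI _ => by
      refine ⟨hI.1, fun x hx h1 h2 => ?_⟩
      rcases mem_union.1 hx with hx | hx
      · exact hI.2 x hx h1 h2
      · have h3 := (mem_filter.1 hx).2.1
        exact hI.1 _ _ _ h1 h2 (h3 ▸ hf))
    (q * Fintype.card V * D) ∅
    ⟨by simp [outFiber], by simp [inFiber], by simp, by simp⟩ (by
      simp only [card_empty, Nat.sub_zero]
      apply le_of_eq
      rw [hn]; ring)
  obtain ⟨F, h1, h2, h3⟩ := key
  refine ⟨F, by simpa [sq] using h1, h2, fun I hI => ?_⟩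
  obtain ⟨P, hP, hI', h⟩ := h3 I ⟨hI, by simp [AvoidsLinks]⟩
  exact ⟨P, hP, hI'.2, fun f hf => not_le.1 (h f hf)⟩

theorem exists_deleteLinked_family (A : Finset (V × V)) (P : Finset (V × V × V)) {t m : ℕ}
    (ht : 0 < t) (hm : Fintype.card V ^ 2 ≤ t * m) :
    ∃ F : Finset (Finset (V × V)), F.card ≤ (Fintype.card V ^ 2 + 1) ^ m ∧
      (∀ Y ∈ F, Y ⊆ A) ∧ ∀ I ⊆ A, AvoidsLinks I P → ∃ Y ∈ F, I ⊆ Y ∧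
        ∀ f ∈ I, ((outFiber P f).filter fun x => (x.2.1, x.2.2) ∈ Y).card < t := by
  obtain ⟨F, h1, h2, h3⟩ := exists_greedy_family (S := Finset (V × V)) (E := V × V)
    (step := deleteLinked P)
    (heavy := fun Y f => t ≤ ((outFiber P f).filter fun x => (x.2.1, x.2.2) ∈ Y).card)
    (Inv := fun Y => Y ⊆ A) (R := fun I Y => AvoidsLinks I P ∧ I ⊆ Y)
    (φ := card) (g := t) ht
    (fun Y f hY _ => (filter_subset _ _).trans hY)
    (fun Y f _ hf => by
      have := card_deleteLinked P Y f
      omega)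
    (fun I Y f hf hI _ => by
      refine ⟨hI.1, fun e he => mem_filter.2 ⟨hI.2 he, ?_⟩⟩
      rintro ⟨h, h'⟩
      exact hI.1 _ h' hf (by simpa [← h] using he))
    m A (Subset.refl _) (by
      refine le_trans ?_ hm
      simpa [sq] using card_le_univ A)
  refine ⟨F, by simpa [sq] using h1, h2, fun I hIA hI => ?_⟩
  obtain ⟨Y, hY, hI', h⟩ := h3 I ⟨hI, hIA⟩
  exact ⟨Y, hY, hI'.2, fun f hf => not_le.1 (h f hf)⟩

/-- If the link system is small, the pairs that are not heavy for it span few triangles. -/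
theorem card_trianglePairs_le_of_small {A C : Finset (V × V)} {D q g : ℕ}
    {P : Finset (V × V × V)} (hn : Fintype.card V = q * g) (hDn : D ≤ Fintype.card V)
    (hCA : C ⊆ A) (hC : ∀ f ∈ C, (closing A D P f \ P).card < g)
    (hsmall : q * P.card < Fintype.card V ^ 2 * D) :
    q * (trianglePairs C).card ≤ 4 * Fintype.card V ^ 3 := by
  set n := Fintype.card V with hn'
  set W₁ : Finset (V × V) := univ.filter fun e => D ≤ (outFiber P e).card
  set W₂ : Finset (V × V) := univ.filter fun e => D ≤ (inFiber P e).card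
  have hW₁ : q * W₁.card ≤ n ^ 2 := by
    have h : D * W₁.card ≤ P.card := by
      have h1 : D * W₁.card ≤ (P.filter fun x => (x.1, x.2.1) ∈ W₁).card := by
        refine mul_card_image_le_card_of_maps_to (f := fun x : V × V × V => (x.1, x.2.1))
          (fun x hx => (mem_filter.1 hx).2) D fun e he => ?_
        refine le_trans (mem_filter.1 he).2 (card_le_card fun x hx => ?_)
        obtain ⟨hxP, rfl⟩ := mem_filter.1 hx
        exact mem_filter.2 ⟨mem_filter.2 ⟨hxP, he⟩, rfl⟩
      exact h1.trans (card_le_card (filter_subset _ _))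
    by_contra! h'
    have : q * (D * W₁.card) ≤ q * P.card := by gcongr
    nlinarith
  have hW₂ : q * W₂.card ≤ n ^ 2 := by
    have h : D * W₂.card ≤ P.card := by
      have h1 : D * W₂.card ≤ (P.filter fun x => (x.2.1, x.2.2) ∈ W₂).card := by
        refine mul_card_image_le_card_of_maps_to (f := fun x : V × V × V => (x.2.1, x.2.2))
          (fun x hx => (mem_filter.1 hx).2) D fun e he => ?_
        refine le_trans (mem_filter.1 he).2 (card_le_card fun x hx => ?_)
        obtain ⟨hxP, rfl⟩ := mem_filter.1 hx
        exact mem_filter.2 ⟨mem_filter.2 ⟨hxP, he⟩, rfl⟩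
      exact h1.trans (card_le_card (filter_subset _ _))
    by_contra! h'
    have : q * (D * W₂.card) ≤ q * P.card := by gcongr
    nlinarith
  have hX₁ : (univ.filter fun x : V × V × V => (x.1, x.2.1) ∈ W₁).card ≤ n * W₁.card := by
    refine card_le_mul_card_image_of_maps_to (f := fun x : V × V × V => (x.1, x.2.1))
      (fun x hx => (mem_filter.1 hx).2) n fun e _ => ?_
    refine card_le_card_of_injOn (fun x => x.2.2) (t := univ) (by simp) ?_
    rintro ⟨a, b, c⟩ h ⟨a', b', c'⟩ h' heq
    simp only [coe_filter, mem_filter, Set.mem_ofPred_eq] at h h' heq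
    grind
  have hX₂ : (univ.filter fun x : V × V × V => (x.2.1, x.2.2) ∈ W₂).card ≤ n * W₂.card := by
    refine card_le_mul_card_image_of_maps_to (f := fun x : V × V × V => (x.2.1, x.2.2))
      (fun x hx => (mem_filter.1 hx).2) n fun e _ => ?_
    refine card_le_card_of_injOn (fun x => x.1) (t := univ) (by simp) ?_
    rintro ⟨a, b, c⟩ h ⟨a', b', c'⟩ h' heq
    simp only [coe_filter, mem_filter, Set.mem_ofPred_eq] at h h' heq
    grind
  have hX₃ : (C.biUnion fun f => closing A D P f \ P).card ≤ n ^ 2 * g := by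
    refine (card_biUnion_le_card_mul _ _ g fun f hf => (hC f hf).le).trans ?_
    gcongr
    simpa [sq] using card_le_univ C
  have hsub : trianglePairs C ⊆ P ∪ (univ.filter fun x : V × V × V => (x.1, x.2.1) ∈ W₁) ∪
      (univ.filter fun x : V × V × V => (x.2.1, x.2.2) ∈ W₂) ∪
      (C.biUnion fun f => closing A D P f \ P) := by
    intro x hx
    obtain ⟨-, h1, h2, h3⟩ := mem_filter.1 hx
    by_cases hxP : x ∈ P
    · simp [hxP]
    by_cases hx1 : (x.1, x.2.1) ∈ W₁
    · simp [hx1]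
    by_cases hx2 : (x.2.1, x.2.2) ∈ W₂
    · simp [hx2]
    refine mem_union_right _ (mem_biUnion.2 ⟨_, h3, mem_sdiff.2 ⟨mem_filter.2
      ⟨mem_univ _, rfl, hCA h1, hCA h2, ?_, ?_⟩, hxP⟩⟩)
    · simpa [W₁] using hx1
    · simpa [W₂] using hx2
  have hT := (card_le_card hsub).trans ((card_union_le _ _).trans (Nat.add_le_add_right
    ((card_union_le _ _).trans (Nat.add_le_add_right (card_union_le _ _) _)) _))
  calc q * (trianglePairs C).card
      ≤ q * (P.card + n * W₁.card + n * W₂.card + n ^ 2 * g) := by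
        gcongr
        omega
    _ = q * P.card + n * (q * W₁.card) + n * (q * W₂.card) + n ^ 2 * (q * g) := by ring
    _ ≤ n ^ 2 * n + n * n ^ 2 + n * n ^ 2 + n ^ 2 * n := by
        have hPn : q * P.card ≤ n ^ 2 * n := hsmall.le.trans (by gcongr)
        rw [← hn]
        gcongr
    _ = 4 * n ^ 3 := by ring

/-- If the link system is large, a set containing few links misses many pairs. -/
theorem card_add_le_of_large {A Y C : Finset (V × V)} {D q t : ℕ} {P : Finset (V × V × V)}
    (hP : IsLinkSystem A D P) (ht : 0 < t) (hq : 0 < q) (hD : D = 2 * q * t) (hYA : Y ⊆ A)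
    (hC : C = Y.filter fun f =>
      ((outFiber P f).filter fun x => (x.2.1, x.2.2) ∈ Y).card < t)
    (hlarge : Fintype.card V ^ 2 * D ≤ q * P.card) :
    4 * q * C.card + Fintype.card V ^ 2 ≤ 4 * q * A.card := by
  set n := Fintype.card V with hn'
  set B : Finset (V × V) := A.filter fun f =>
    t ≤ ((outFiber P f).filter fun x => (x.2.1, x.2.2) ∈ Y).card with hB
  have h1 : (P.filter fun x => (x.2.1, x.2.2) ∈ A \ Y).card ≤ D * (A \ Y).card := by
    refine card_le_mul_card_image_of_maps_to (f := fun x : V × V × V => (x.2.1, x.2.2))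
      (fun x hx => (mem_filter.1 hx).2) D fun e _ => ?_
    refine (card_le_card fun x hx => ?_).trans (hP.in_le e)
    obtain ⟨hx, hxe⟩ := mem_filter.1 hx
    exact mem_filter.2 ⟨(mem_filter.1 hx).1, hxe⟩
  have h2 : (P.filter fun x => (x.1, x.2.1) ∈ B).card ≤ D * B.card := by
    refine card_le_mul_card_image_of_maps_to (f := fun x : V × V × V => (x.1, x.2.1))
      (fun x hx => (mem_filter.1 hx).2) D fun e _ => ?_
    refine (card_le_card fun x hx => ?_).trans (hP.out_le e)
    obtain ⟨hx, hxe⟩ := mem_filter.1 hx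
    exact mem_filter.2 ⟨(mem_filter.1 hx).1, hxe⟩
  have h3 : (P.filter fun x => (x.2.1, x.2.2) ∈ Y ∧ (x.1, x.2.1) ∉ B).card ≤ t * n ^ 2 := by
    have := card_le_mul_card_image_of_maps_to (f := fun x : V × V × V => (x.1, x.2.1))
      (s := P.filter fun x => (x.2.1, x.2.2) ∈ Y ∧ (x.1, x.2.1) ∉ B)
      (t := univ) (fun _ _ => mem_univ _) t (fun e _ => ?_)
    · rwa [card_univ, Fintype.card_prod, ← sq] at this
    · by_cases he : e ∈ A \ B
      · obtain ⟨heA, heB⟩ := mem_sdiff.1 he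
        have h4 : ((outFiber P e).filter fun x => (x.2.1, x.2.2) ∈ Y).card < t := by
          by_contra! h5
          exact heB (mem_filter.2 ⟨heA, h5⟩)
        refine (card_le_card fun x hx => ?_).trans h4.le
        obtain ⟨hx, hxe⟩ := mem_filter.1 hx
        obtain ⟨hx, hxY, -⟩ := mem_filter.1 hx
        exact mem_filter.2 ⟨mem_filter.2 ⟨hx, hxe⟩, hxY⟩
      · rw [filter_eq_empty_iff.2]
        · simp
        · rintro x hx rfl
          obtain ⟨hx, -, hxB⟩ := mem_filter.1 hx
          exact he (mem_sdiff.2 ⟨hP.out_mem x hx, hxB⟩)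
  have hsub : P ⊆ (P.filter fun x => (x.2.1, x.2.2) ∈ A \ Y) ∪
      (P.filter fun x => (x.1, x.2.1) ∈ B) ∪
      (P.filter fun x => (x.2.1, x.2.2) ∈ Y ∧ (x.1, x.2.1) ∉ B) := by
    intro x hx
    have := hP.in_mem x hx
    simp only [mem_union, mem_filter, mem_sdiff]
    tauto
  have hcard := (card_le_card hsub).trans ((card_union_le _ _).trans
    (Nat.add_le_add_right (card_union_le _ _) _))
  have hCA : C ⊆ A := hC ▸ (filter_subset _ _).trans hYA
  have hlostY : (A \ Y).card ≤ (A \ C).card :=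
    card_le_card (sdiff_subset_sdiff (Subset.refl _) (hC ▸ filter_subset _ _))
  have hlostB : B.card ≤ (A \ C).card := by
    refine card_le_card fun f hf => ?_
    obtain ⟨hfA, hf⟩ := mem_filter.1 hf
    refine mem_sdiff.2 ⟨hfA, fun hfC => ?_⟩
    rw [hC] at hfC
    exact absurd (mem_filter.1 hfC).2 (not_lt.2 hf)
  have hsplit := card_sdiff_add_card_eq_card hCA
  have hP2 : P.card ≤ 2 * D * (A \ C).card + t * n ^ 2 := by nlinarith
  have h6 : t * n ^ 2 ≤ t * (4 * q * (A \ C).card) := by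
    have h7 : n ^ 2 * D ≤ q * (2 * D * (A \ C).card + t * n ^ 2) :=
      hlarge.trans (by gcongr)
    rw [hD] at h7
    have h8 : q * (t * n ^ 2) ≤ q * (t * (4 * q * (A \ C).card)) := by nlinarith
    exact Nat.le_of_mul_le_mul_left h8 hq
  have h9 := Nat.le_of_mul_le_mul_left h6 ht
  rw [← hsplit]
  nlinarith

/-- One step of the container algorithm. -/
theorem exists_container_step (A : Finset (V × V)) {D q t : ℕ} (ht : 0 < t) (hq : 0 < q)
    (hD : D = 2 * q * t) (hn : Fintype.card V = D ^ 2) :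
    ∃ F : Finset (Finset (V × V)),
      F.card ≤ (Fintype.card V ^ 2 + 1) ^ (3 * q * Fintype.card V * D) ∧
      (∀ C ∈ F, IsSymmPairs C ∧ (2 * q * C.card ≤ (q + 8) * Fintype.card V ^ 2 ∨
        4 * q * C.card + Fintype.card V ^ 2 ≤ 4 * q * A.card)) ∧
      ∀ I ⊆ A, IsSymmPairs I → IsTriangleFreePairs I → ∃ C ∈ F, I ⊆ C := by
  have hDpos : 0 < D := by rw [hD]; positivity
  have hg : 0 < 2 * t * D := by positivity
  have hn2 : Fintype.card V = q * (2 * t * D) := by rw [hn, sq]; nth_rw 1 [hD]; ring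
  obtain ⟨F₁, hF₁, hlink, hcov⟩ := exists_linkSystem_family A (D := D) hg hn2
  have key : ∀ P : Finset (V × V × V), ∃ F : Finset (Finset (V × V)),
      F.card ≤ (Fintype.card V ^ 2 + 1) ^ (2 * q * Fintype.card V * D) ∧
      (IsLinkSystem A D P → (∀ C ∈ F, IsSymmPairs C ∧
        (2 * q * C.card ≤ (q + 8) * Fintype.card V ^ 2 ∨
          4 * q * C.card + Fintype.card V ^ 2 ≤ 4 * q * A.card)) ∧
        ∀ I ⊆ A, IsSymmPairs I → AvoidsLinks I P →
          (∀ f ∈ I, (closing A D P f \ P).card < 2 * t * D) → ∃ C ∈ F, I ⊆ C) := by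
    intro P
    rcases lt_or_ge (q * P.card) (Fintype.card V ^ 2 * D) with hsmall | hlarge
    · set C := A.filter fun f => (closing A D P f \ P).card < 2 * t * D
      refine ⟨{symmPart C}, by rw [card_singleton]; exact Nat.one_le_pow _ _ (by omega),
        fun _ => ⟨?_, ?_⟩⟩
      · intro C' hC'
        rw [mem_singleton.1 hC']
        refine ⟨isSymmPairs_symmPart C, Or.inl (card_le_of_card_trianglePairs_le
          (isSymmPairs_symmPart C) hq (card_trianglePairs_le_of_small (A := A) (P := P) hn2
          (by rw [hn]; nlinarith) ((symmPart_subset C).trans (filter_subset _ _))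
          (fun f hf => (mem_filter.1 (symmPart_subset C hf)).2) hsmall))⟩
      · intro I hIA hI _ hlow
        exact ⟨_, mem_singleton_self _,
          subset_symmPart hI fun f hf => mem_filter.2 ⟨hIA hf, hlow f hf⟩⟩
    · obtain ⟨F, h1, h2, h3⟩ := exists_deleteLinked_family A P ht
        (m := 2 * q * Fintype.card V * D) (by
          apply le_of_eq
          calc Fintype.card V ^ 2 = Fintype.card V * (D * D) := by rw [sq, ← sq D, ← hn]
            _ = Fintype.card V * ((2 * q * t) * D) := by rw [← hD]
            _ = _ := by ring)
      refine ⟨F.image fun Y => symmPart (Y.filter fun f =>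
        ((outFiber P f).filter fun x => (x.2.1, x.2.2) ∈ Y).card < t),
        card_image_le.trans h1, fun hP => ⟨?_, ?_⟩⟩
      · intro C' hC'
        obtain ⟨Y, hY, rfl⟩ := mem_image.1 hC'
        refine ⟨isSymmPairs_symmPart _, Or.inr ?_⟩
        refine le_trans ?_ (card_add_le_of_large hP ht hq hD (h2 Y hY) rfl hlarge)
        gcongr
        exact symmPart_subset _
      · intro I hIA hI hav _
        obtain ⟨Y, hY, hIY, hlow⟩ := h3 I hIA hav
        exact ⟨_, mem_image_of_mem _ hY,
          subset_symmPart hI fun f hf => mem_filter.2 ⟨hIY hf, hlow f hf⟩⟩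
  choose F₂ hF₂ hF₂' using key
  refine ⟨F₁.biUnion F₂, ?_, ?_, ?_⟩
  · refine (card_biUnion_le_card_mul _ _ _ fun P _ => hF₂ P).trans ?_
    calc _ ≤ (Fintype.card V ^ 2 + 1) ^ (q * Fintype.card V * D) *
          (Fintype.card V ^ 2 + 1) ^ (2 * q * Fintype.card V * D) := by gcongr
      _ = _ := by rw [← pow_add]; congr 1; ring
  · intro C hC
    obtain ⟨P, hP, hC⟩ := mem_biUnion.1 hC
    exact (hF₂' P (hlink P hP)).1 C hC
  · intro I hIA hI hfree
    obtain ⟨P, hP, hav, hlow⟩ := hcov I hfree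
    obtain ⟨C, hC, hIC⟩ := (hF₂' P (hlink P hP)).2 I hIA hI hav hlow
    exact ⟨C, mem_biUnion.2 ⟨P, hP, hC⟩, hIC⟩

theorem exists_container_iterate {D q t : ℕ} (ht : 0 < t) (hq : 0 < q)
    (hD : D = 2 * q * t) (hn : Fintype.card V = D ^ 2) (s : ℕ) :
    ∀ A : Finset (V × V), IsSymmPairs A →
      4 * q * A.card ≤ 2 * (q + 8) * Fintype.card V ^ 2 + s * Fintype.card V ^ 2 →
      ∃ F : Finset (Finset (V × V)),
        F.card ≤ (Fintype.card V ^ 2 + 1) ^ (3 * q * Fintype.card V * D * s) ∧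
        (∀ C ∈ F, IsSymmPairs C ∧ 2 * q * C.card ≤ (q + 8) * Fintype.card V ^ 2) ∧
        ∀ I ⊆ A, IsSymmPairs I → IsTriangleFreePairs I → ∃ C ∈ F, I ⊆ C := by
  induction s with
  | zero =>
    intro A hA hcard
    refine ⟨{A}, by simp, ?_, fun I hI _ _ => ⟨A, mem_singleton_self _, hI⟩⟩
    intro C hC
    rw [mem_singleton.1 hC]
    exact ⟨hA, by linarith⟩
  | succ s ih =>
    intro A hA hcard
    obtain ⟨F₁, hF₁, hC₁, hcov⟩ := exists_container_step A ht hq hD hn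
    have key : ∀ C : Finset (V × V), ∃ F : Finset (Finset (V × V)),
        F.card ≤ (Fintype.card V ^ 2 + 1) ^ (3 * q * Fintype.card V * D * s) ∧
        (∀ C ∈ F, IsSymmPairs C ∧ 2 * q * C.card ≤ (q + 8) * Fintype.card V ^ 2) ∧
        (C ∈ F₁ → ∀ I ⊆ C, IsSymmPairs I → IsTriangleFreePairs I → ∃ C ∈ F, I ⊆ C) := by
      intro C
      by_cases hC : C ∈ F₁
      · obtain ⟨hsymm, h⟩ := hC₁ C hC
        obtain ⟨F, h1, h2, h3⟩ := ih C hsymm (by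
          rcases h with h | h
          · nlinarith [Nat.zero_le (s * Fintype.card V ^ 2)]
          · linarith)
        exact ⟨F, h1, h2, fun _ => h3⟩
      · exact ⟨∅, by simp, by simp, fun h => absurd h hC⟩
    choose F₂ h1 h2 h3 using key
    refine ⟨F₁.biUnion F₂, ?_, ?_, ?_⟩
    · refine (card_biUnion_le_card_mul _ _ _ fun P _ => h1 P).trans ?_
      calc _ ≤ (Fintype.card V ^ 2 + 1) ^ (3 * q * Fintype.card V * D) *
            (Fintype.card V ^ 2 + 1) ^ (3 * q * Fintype.card V * D * s) := by gcongr
        _ = _ := by rw [← pow_add]; congr 1; ring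
    · intro C hC
      obtain ⟨C₁, -, hC⟩ := mem_biUnion.1 hC
      exact h2 C₁ C hC
    · intro I hIA hI hfree
      obtain ⟨C₁, hC₁, hIC₁⟩ := hcov I hIA hI hfree
      obtain ⟨C, hC, hIC⟩ := h3 C₁ hC₁ I hIC₁ hI hfree
      exact ⟨C, mem_biUnion.2 ⟨C₁, hC₁, hC⟩, hIC⟩

/-- The container theorem for triangle-free graphs on `D ^ 2` vertices: few symmetric sets of
density little more than one half contain every triangle-free graph. -/
theorem exists_triangleFree_containers {D q t : ℕ} (ht : 0 < t) (hq : 0 < q)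
    (hD : D = 2 * q * t) (hn : Fintype.card V = D ^ 2) :
    ∃ F : Finset (Finset (V × V)),
      F.card ≤ (D ^ 4 + 1) ^ (12 * q ^ 2 * D ^ 3) ∧
      (∀ C ∈ F, IsSymmPairs C ∧ 2 * q * C.card ≤ (q + 8) * D ^ 4) ∧
      ∀ I, IsSymmPairs I → IsTriangleFreePairs I → ∃ C ∈ F, I ⊆ C := by
  obtain ⟨F, h1, h2, h3⟩ := exists_container_iterate (V := V) ht hq hD hn (4 * q) univ
    (fun _ _ _ => mem_univ _) (by
      rw [card_univ, Fintype.card_prod, ← sq]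
      exact Nat.le_add_left _ _)
  have hsq : Fintype.card V ^ 2 = D ^ 4 := by rw [hn]; ring
  rw [hsq] at h1 h2
  refine ⟨F, h1.trans_eq ?_, h2, fun I => h3 I (subset_univ _)⟩
  congr 1
  rw [hn]
  ring

end Containers

section ListRamsey

open Finset

/-- A union bound: if each of the few maps in `𝒮` has many values avoided by a `p`-fraction of the
`k`-subsets, then some assignment of `k`-subsets is somewhere disjoint from each map in `𝒮`. -/
theorem exists_lists_disjoint {E K : Type*} [Fintype E] [DecidableEq E] [Fintype K]
    [DecidableEq K] (𝒮 : Finset (E → Finset K)) (k : ℕ) (p M : ℝ) (hp0 : 0 ≤ p)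
    (hk : k ≤ Fintype.card K)
    (hgood : ∀ S ∈ 𝒮, M ≤ ((univ.filter fun e =>
      p * (Fintype.card K).choose k ≤ ((Fintype.card K - (S e).card).choose k : ℝ)).card : ℝ))
    (hsmall : (𝒮.card : ℝ) * Real.exp (-(p * M)) < 1) :
    ∃ L : E → Finset K, (∀ e, (L e).card = k) ∧ ∀ S ∈ 𝒮, ∃ e, Disjoint (L e) (S e) := by
  set N := (Fintype.card K).choose k with hN
  have hNpos : 0 < N := Nat.choose_pos hk
  set Ω : Finset (E → Finset K) := Fintype.piFinset fun _ => powersetCard k univ with hΩ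
  have hΩcard : Ω.card = N ^ Fintype.card E := by
    simp [hΩ, Fintype.card_piFinset, hN]
  set bad : (E → Finset K) → Finset (E → Finset K) := fun S =>
    Fintype.piFinset fun e => (powersetCard k univ).filter fun T => ¬ Disjoint T (S e) with hbad
  have hcard_hit : ∀ X : Finset K,
      (((powersetCard k univ).filter fun T => ¬ Disjoint T X).card : ℝ) =
        N - ((Fintype.card K - X.card).choose k : ℝ) := by
    intro X
    have h1 := card_filter_add_card_filter_not (s := powersetCard k (univ : Finset K))
      (fun T => Disjoint T X)
    have h2 : (powersetCard k (univ : Finset K)).filter (fun T => Disjoint T X) =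
        powersetCard k Xᶜ := by
      ext T
      simp only [mem_filter, mem_powersetCard, subset_univ, true_and,
        subset_compl_iff_disjoint_right]
      tauto
    rw [h2, card_powersetCard, card_powersetCard, card_compl, card_univ] at h1
    rw [eq_sub_iff_add_eq, add_comm]
    exact_mod_cast h1
  have hbadcard : ∀ S ∈ 𝒮,
      ((bad S).card : ℝ) ≤ (N : ℝ) ^ Fintype.card E * Real.exp (-(p * M)) := by
    intro S hS
    set G := univ.filter fun e =>
      p * N ≤ ((Fintype.card K - (S e).card).choose k : ℝ) with hG
    have h1 : ((bad S).card : ℝ) ≤ ∏ e, (N * if e ∈ G then Real.exp (-p) else 1 : ℝ) := by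
      rw [hbad, Fintype.card_piFinset, Nat.cast_prod]
      refine prod_le_prod (fun _ _ => Nat.cast_nonneg _) fun e _ => ?_
      rw [hcard_hit]
      split_ifs with he
      · have h2 := (mem_filter.1 he).2
        have h3 := Real.add_one_le_exp (-p)
        have h4 : (0 : ℝ) ≤ N := Nat.cast_nonneg _
        nlinarith
      · have : (0 : ℝ) ≤ ((Fintype.card K - (S e).card).choose k : ℝ) := Nat.cast_nonneg _
        linarith
    refine h1.trans ?_
    rw [prod_mul_distrib, prod_const, card_univ, prod_ite, prod_const_one, mul_one, prod_const,
      filter_mem_eq_inter, univ_inter, ← Real.exp_nat_mul]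
    gcongr
    have := hgood S hS
    nlinarith
  have hlt : (𝒮.biUnion bad).card < Ω.card := by
    have h1 : ((𝒮.biUnion bad).card : ℝ) ≤ ∑ S ∈ 𝒮, ((bad S).card : ℝ) := by
      exact_mod_cast card_biUnion_le
    have h2 := sum_le_sum hbadcard
    rw [sum_const, nsmul_eq_mul] at h2
    have h3 : (0 : ℝ) < (N : ℝ) ^ Fintype.card E := by positivity
    have h4 : ((𝒮.biUnion bad).card : ℝ) < (Ω.card : ℝ) := by
      rw [hΩcard]
      push_cast
      nlinarith
    exact_mod_cast h4
  obtain ⟨L, hLΩ, hL⟩ := exists_mem_notMem_of_card_lt_card hlt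
  have hLk : ∀ e, L e ∈ powersetCard k (univ : Finset K) := Fintype.mem_piFinset.1 hLΩ
  refine ⟨L, fun e => (mem_powersetCard.1 (hLk e)).2, fun S hS => ?_⟩
  by_contra! h
  exact hL (mem_biUnion.2 ⟨S, hS, Fintype.mem_piFinset.2 fun e =>
    mem_filter.2 ⟨hLk e, h e⟩⟩)

theorem pow_mul_choose_le_choose {r k m : ℕ} (hr : 9 ≤ r) (hm : (r - 8) * k ≤ m) :
    (((r : ℝ) - 9) / (2 * r)) ^ k * ((2 * r * k).choose k : ℝ) ≤ (m.choose k : ℝ) := by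
  have hr' : (9 : ℝ) ≤ r := by exact_mod_cast hr
  have hfac : (0 : ℝ) < (k.factorial : ℝ) := by positivity
  rw [← mul_le_mul_iff_right₀ hfac]
  have h1 : (k.factorial : ℝ) * ((2 * r * k).choose k : ℝ) ≤ (2 * r * k : ℝ) ^ k := by
    rw [← Nat.cast_mul, ← Nat.descFactorial_eq_factorial_mul_choose]
    exact_mod_cast Nat.descFactorial_le_pow _ _
  have h2 : (((r : ℝ) - 9) * k) ^ k ≤ (k.factorial : ℝ) * (m.choose k : ℝ) := by
    rw [← Nat.cast_mul, ← Nat.descFactorial_eq_factorial_mul_choose]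
    have h3 : ((r - 9) * k) ^ k ≤ m.descFactorial k := by
      refine le_trans ?_ (Nat.pow_sub_le_descFactorial m k)
      gcongr
      have : (r - 8) * k = (r - 9) * k + k := by
        rw [show r - 8 = r - 9 + 1 by omega, Nat.succ_mul]
      omega
    have h4 : (((r - 9 : ℕ) : ℝ)) = (r : ℝ) - 9 := by push_cast [Nat.cast_sub hr]; rfl
    rw [← h4]
    exact_mod_cast h3
  calc (k.factorial : ℝ) * ((((r : ℝ) - 9) / (2 * r)) ^ k * ((2 * r * k).choose k : ℝ))
      = (((r : ℝ) - 9) / (2 * r)) ^ k * ((k.factorial : ℝ) * ((2 * r * k).choose k : ℝ)) := by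
        ring
    _ ≤ (((r : ℝ) - 9) / (2 * r)) ^ k * (2 * r * k : ℝ) ^ k := by
        have : 0 ≤ ((r : ℝ) - 9) / (2 * r) := div_nonneg (by linarith) (by linarith)
        gcongr
    _ = (((r : ℝ) - 9) * k) ^ k := by
        rw [← mul_pow]
        congr 1
        field_simp
    _ ≤ _ := h2

/-- The edges of the complete graph on `V`. -/
abbrev CompleteEdge (V : Type*) := {e : Sym2 V // ¬ e.IsDiag}

/-- The indices of the sets of pairs containing the edge `e`. -/
def edgeIndices {V K : Type*} [DecidableEq V] [Fintype K] (A : K → Finset (V × V))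
    (e : CompleteEdge V) : Finset K :=
  univ.filter fun i => e.1 ∈ (A i).image (fun x => s(x.1, x.2))

theorem two_mul_card_edges_le {V : Type*} [Fintype V] [DecidableEq V] {A : Finset (V × V)}
    (hA : IsSymmPairs A) :
    2 * (univ.filter fun e : CompleteEdge V =>
      e.1 ∈ A.image (fun x => s(x.1, x.2))).card ≤ A.card := by
  set B := univ.filter fun e : CompleteEdge V => e.1 ∈ A.image (fun x => s(x.1, x.2)) with hB
  have h1 : 2 * (B.map (Function.Embedding.subtype _)).card ≤
      (A.filter fun x => s(x.1, x.2) ∈ B.map (Function.Embedding.subtype _)).card := by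
    refine mul_card_image_le_card_of_maps_to (f := fun x : V × V => s(x.1, x.2))
      (fun x hx => (mem_filter.1 hx).2) 2 fun e he => ?_
    obtain ⟨⟨e, hdiag⟩, heB, rfl⟩ := mem_map.1 he
    obtain ⟨⟨a, b⟩, hab, rfl⟩ := mem_image.1 (mem_filter.1 heB).2
    have hne : a ≠ b := by simpa using hdiag
    have hpair : ({(a, b), (b, a)} : Finset (V × V)).card = 2 :=
      card_pair (by simp [hne])
    rw [← hpair]
    refine card_le_card fun x hx => ?_
    rcases mem_insert.1 hx with rfl | hx
    · exact mem_filter.2 ⟨mem_filter.2 ⟨hab, he⟩, rfl⟩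
    · rw [mem_singleton.1 hx]
      have hswap : s(b, a) = s(a, b) := Sym2.eq_swap
      exact mem_filter.2 ⟨mem_filter.2 ⟨hA _ _ hab, by rw [hswap]; exact he⟩, hswap⟩
  rw [card_map] at h1
  exact h1.trans (card_le_card (filter_subset _ _))

/-- If all the sets `A i` have density little more than one half, then many edges lie in little
more than half of them. -/
theorem card_few_edgeIndices {n r k : ℕ} (hr : 9 ≤ r) (hrn : r ≤ n) (hk : 0 < k)
    (A : Fin (2 * r * k) → Finset (Fin n × Fin n)) (hA : ∀ i, IsSymmPairs (A i))
    (hcard : ∀ i, 2 * (2 * r) * (A i).card ≤ (2 * r + 8) * n ^ 2) :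
    n ^ 2 ≤ 2 * r * (univ.filter fun e => (edgeIndices A e).card ≤ (r + 8) * k).card := by
  set G := univ.filter fun e => (edgeIndices A e).card ≤ (r + 8) * k with hG
  set H := univ.filter fun e => ¬ (edgeIndices A e).card ≤ (r + 8) * k with hH
  have hGH : G.card + H.card = n.choose 2 := by
    rw [hG, hH, card_filter_add_card_filter_not, card_univ, Sym2.card_subtype_not_diag,
      Fintype.card_fin]
  have hdouble : ∑ e, (edgeIndices A e).card = ∑ i, (univ.filter fun e : CompleteEdge (Fin n) =>
      e.1 ∈ (A i).image (fun x => s(x.1, x.2))).card := by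
    simp only [edgeIndices, card_filter]
    exact sum_comm
  have hlow : H.card * ((r + 8) * k) ≤ ∑ e, (edgeIndices A e).card := by
    rw [← smul_eq_mul]
    refine (card_nsmul_le_sum H _ _ fun e he => (not_le.1 (mem_filter.1 he).2).le).trans ?_
    exact sum_le_sum_of_subset (subset_univ _)
  have hup : 8 * r * ∑ e, (edgeIndices A e).card ≤ (2 * r * k) * ((2 * r + 8) * n ^ 2) := by
    rw [hdouble, mul_sum]
    have := sum_le_card_nsmul (univ : Finset (Fin (2 * r * k))) (fun i =>
      8 * r * (univ.filter fun e : CompleteEdge (Fin n) =>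
        e.1 ∈ (A i).image (fun x => s(x.1, x.2))).card) ((2 * r + 8) * n ^ 2) (fun i _ => by
          have h1 := two_mul_card_edges_le (hA i)
          have h2 := hcard i
          nlinarith)
    simpa using this
  have hH2 : 2 * (H.card * (r + 8)) ≤ (r + 4) * n ^ 2 := by
    have h1 : 8 * r * (H.card * ((r + 8) * k)) ≤ (2 * r * k) * ((2 * r + 8) * n ^ 2) :=
      (Nat.mul_le_mul_left _ hlow).trans hup
    have hpos : 0 < 4 * (r * k) := by positivity
    refine Nat.le_of_mul_le_mul_left ?_ hpos
    calc 4 * (r * k) * (2 * (H.card * (r + 8))) = 8 * r * (H.card * ((r + 8) * k)) := by ring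
      _ ≤ (2 * r * k) * ((2 * r + 8) * n ^ 2) := h1
      _ = _ := by ring
  have hchoose : 2 * n.choose 2 + n = n ^ 2 := by
    rcases n with _ | n
    · simp
    · rw [Nat.choose_two_right]
      have := Nat.div_mul_cancel (Nat.even_mul_pred_self (n + 1)).two_dvd
      simp only [Nat.add_sub_cancel] at *
      nlinarith
  have hGH' : 2 * G.card + 2 * H.card + n = n ^ 2 := by omega
  zify at *
  nlinarith

theorem hasMonoCopy_triangle {β : Type*} {n : ℕ} {c : Sym2 (Fin n) → β} {u v w : Fin n} {x : β}
    (huv : u ≠ v) (hvw : v ≠ w) (hwu : w ≠ u) (cuv : c s(u, v) = x) (cvw : c s(v, w) = x)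
    (cwu : c s(w, u) = x) : HasMonoCopy (⊤ : SimpleGraph (Fin 3)) c := by
  have cvu : c s(v, u) = x := by rwa [Sym2.eq_swap]
  have cwv : c s(w, v) = x := by rwa [Sym2.eq_swap]
  have cuw : c s(u, w) = x := by rwa [Sym2.eq_swap]
  refine ⟨![u, v, w], x, fun a b => ?_, fun a b hab => ?_⟩
  · fin_cases a <;> fin_cases b <;> simp [huv, hvw, hwu, huv.symm, hvw.symm, hwu.symm]
  · fin_cases a <;> fin_cases b <;> first | exact absurd rfl hab | assumption

theorem listRamsey_triangle_le_sq {r t k D : ℕ} (hr : 9 ≤ r) (ht : 0 < t) (hk : 0 < k)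
    (hD : D = 2 * (2 * r) * t)
    (hlarge : 12 * (2 * (r : ℝ)) ^ 4 * k * Real.log ((D : ℝ) ^ 4 + 1) <
      (((r : ℝ) - 9) / (2 * r)) ^ k * D) :
    listRamsey (⊤ : SimpleGraph (Fin 3)) k ≤ D ^ 2 := by
  classical
  set p : ℝ := (((r : ℝ) - 9) / (2 * r)) ^ k with hp
  have hr' : (9 : ℝ) ≤ r := by exact_mod_cast hr
  have hbase : 0 ≤ ((r : ℝ) - 9) / (2 * r) := div_nonneg (by linarith) (by linarith)
  have hp0 : 0 ≤ p := pow_nonneg hbase k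
  have hDpos : 0 < D := by rw [hD]; positivity
  have hrD : r ≤ D ^ 2 := by
    have h1 : r ≤ D := by rw [hD]; nlinarith
    nlinarith
  obtain ⟨F, hF, hFC, hcov⟩ := exists_triangleFree_containers (V := Fin (D ^ 2)) ht
    (q := 2 * r) (by positivity) hD (Fintype.card_fin _)
  set 𝒮 : Finset (CompleteEdge (Fin (D ^ 2)) → Finset (Fin (2 * r * k))) :=
    (Fintype.piFinset fun _ => F).image edgeIndices with h𝒮
  have h𝒮card : 𝒮.card ≤ (D ^ 4 + 1) ^ (12 * (2 * r) ^ 2 * D ^ 3 * (2 * r * k)) := by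
    refine card_image_le.trans ?_
    rw [Fintype.card_piFinset, prod_const, card_univ, Fintype.card_fin,
      pow_mul _ (12 * (2 * r) ^ 2 * D ^ 3)]
    gcongr
  obtain ⟨L, hLk, hL⟩ := exists_lists_disjoint 𝒮 k p ((D : ℝ) ^ 4 / (2 * r)) hp0
    (by rw [Fintype.card_fin]; nlinarith) (by
      intro S hS
      obtain ⟨A, hA, rfl⟩ := mem_image.1 hS
      have hA' : ∀ i, A i ∈ F := Fintype.mem_piFinset.1 hA
      have h1 := card_few_edgeIndices hr hrD hk A (fun i => (hFC _ (hA' i)).1)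
        (fun i => (hFC _ (hA' i)).2.trans_eq (by ring))
      rw [div_le_iff₀ (by linarith)]
      have h2 : (univ.filter fun e => (edgeIndices A e).card ≤ (r + 8) * k).card ≤
          (univ.filter fun e => p * (Fintype.card (Fin (2 * r * k))).choose k ≤
            ((Fintype.card (Fin (2 * r * k)) - (edgeIndices A e).card).choose k : ℝ)).card := by
        refine card_le_card fun e he => mem_filter.2 ⟨mem_univ _, ?_⟩
        rw [Fintype.card_fin]
        refine pow_mul_choose_le_choose hr ?_
        have h3 := (mem_filter.1 he).2
        have h4 : (r - 8) * k + (r + 8) * k = 2 * r * k := by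
          rw [← add_mul]
          congr 1
          omega
        omega
      have h5 : (D ^ 2) ^ 2 ≤ 2 * r * (univ.filter fun e =>
          p * (Fintype.card (Fin (2 * r * k))).choose k ≤
            ((Fintype.card (Fin (2 * r * k)) - (edgeIndices A e).card).choose k : ℝ)).card :=
        h1.trans (Nat.mul_le_mul_left _ h2)
      rw [← pow_mul] at h5
      rw [mul_comm]
      exact_mod_cast h5) (by
      have h1 : (𝒮.card : ℝ) ≤ Real.exp (Real.log ((D : ℝ) ^ 4 + 1) *
          (12 * (2 * r) ^ 2 * D ^ 3 * (2 * r * k))) := by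
        have h2 : (𝒮.card : ℝ) ≤
            ((D : ℝ) ^ 4 + 1) ^ (12 * (2 * r) ^ 2 * D ^ 3 * (2 * r * k)) := by
          exact_mod_cast h𝒮card
        refine h2.trans_eq ?_
        rw [← Real.rpow_natCast, Real.rpow_def_of_pos (by positivity)]
        push_cast
        rfl
      calc (𝒮.card : ℝ) * Real.exp (-(p * ((D : ℝ) ^ 4 / (2 * r))))
          ≤ Real.exp (Real.log ((D : ℝ) ^ 4 + 1) *
            (12 * (2 * r) ^ 2 * D ^ 3 * (2 * r * k))) *
              Real.exp (-(p * ((D : ℝ) ^ 4 / (2 * r)))) := by gcongr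
        _ = Real.exp (((D : ℝ) ^ 3 / (2 * r)) * (12 * (2 * (r : ℝ)) ^ 4 * k *
              Real.log ((D : ℝ) ^ 4 + 1) - p * D)) := by
            rw [← Real.exp_add]
            congr 1
            field_simp
            ring
        _ < 1 := by
            rw [Real.exp_lt_one_iff]
            exact mul_neg_of_pos_of_neg (by positivity) (by linarith))
  refine Nat.sInf_le ⟨fun e => if h : e.IsDiag then ∅ else (L ⟨e, h⟩).map Fin.valEmbedding,
    fun e he => by simp [he, hLk], fun c hc => ?_⟩
  by_contra hmono
  set I : Fin (2 * r * k) → Finset (Fin (D ^ 2) × Fin (D ^ 2)) := fun i =>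
    univ.filter fun x => x.1 ≠ x.2 ∧ c s(x.1, x.2) = i with hI
  have hsymm : ∀ i, IsSymmPairs (I i) := by
    intro i a b h
    simp only [hI, mem_filter, mem_univ, true_and] at h ⊢
    exact ⟨h.1.symm, Sym2.eq_swap (a := a) (b := b) ▸ h.2⟩
  have hfree : ∀ i, IsTriangleFreePairs (I i) := by
    intro i a₀ a₁ a₂ h₀ h₁ h₂
    simp only [hI, mem_filter, mem_univ, true_and] at h₀ h₁ h₂
    exact hmono (hasMonoCopy_triangle h₀.1 h₁.1 h₂.1 h₀.2 h₁.2 h₂.2)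
  choose A hAF hIA using fun i => hcov (I i) (hsymm i) (hfree i)
  obtain ⟨⟨e, hdiag⟩, he⟩ := hL (edgeIndices A)
    (mem_image_of_mem _ (Fintype.mem_piFinset.2 hAF))
  have hce := hc e hdiag
  simp only [hdiag, dite_false, mem_map, Fin.valEmbedding_apply] at hce
  obtain ⟨i, hi, hie⟩ := hce
  refine disjoint_left.1 he hi (mem_filter.2 ⟨mem_univ _, ?_⟩)
  induction e using Sym2.ind with
  | _ a b =>
    exact mem_image.2 ⟨(a, b), hIA i (mem_filter.2 ⟨mem_univ _, by simpa using hdiag, hie.symm⟩),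
      rfl⟩

end ListRamsey

theorem list_ramsey_triangle_upper (ε : ℝ) (hε : 0 < ε) :
    ∃ k₀ : ℕ, ∀ k : ℕ, k₀ ≤ k →
      (listRamsey (⊤ : SimpleGraph (Fin 3)) k : ℝ) ≤ (4 + ε) ^ k := by
  obtain ⟨ρ, hρ2, hρε⟩ : ∃ ρ : ℝ, 2 < ρ ∧ ρ ^ 2 < 4 + ε := by
    refine ⟨Real.sqrt (4 + ε / 2), ?_, ?_⟩
    · exact Real.lt_sqrt_of_sq_lt (by linarith)
    · rw [Real.sq_sqrt (by linarith)]
      linarith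
  obtain ⟨r, hr⟩ := exists_nat_gt (9 * ρ / (ρ - 2) + 9)
  have hfrac : 0 ≤ 9 * ρ / (ρ - 2) := div_nonneg (by linarith) (by linarith)
  have hr9 : (9 : ℝ) ≤ r := by linarith
  set lam : ℝ := ρ * (((r : ℝ) - 9) / (2 * r)) with hlam
  have hlam1 : 1 < lam := by
    have h : 9 * ρ / (ρ - 2) < r := by linarith
    rw [div_lt_iff₀ (by linarith)] at h
    rw [hlam, ← mul_div_assoc, lt_div_iff₀ (by linarith)]
    linarith
  have hratio : 1 < (4 + ε) / ρ ^ 2 := (one_lt_div (by positivity)).2 hρε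
  have hev1 : ∀ᶠ k : ℕ in Filter.atTop, (64 : ℝ) * r ^ 2 ≤ ((4 + ε) / ρ ^ 2) ^ k :=
    (tendsto_pow_atTop_atTop_of_one_lt hratio).eventually_ge_atTop _
  set K : ℝ := 36 * (2 * (r : ℝ)) ^ 4 * Real.log (4 + ε) with hK
  have hev2 : ∀ᶠ k : ℕ in Filter.atTop, K * ((k : ℝ) ^ 2 / lam ^ k) < 1 := by
    have h := (tendsto_pow_const_div_const_pow_of_one_lt 2 hlam1).const_mul K
    rw [mul_zero] at h
    exact h.eventually_lt_const one_pos
  obtain ⟨k₀, hk₀⟩ := Filter.eventually_atTop.1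
    (hev1.and (hev2.and (Filter.eventually_gt_atTop 0)))
  refine ⟨k₀, fun k hk => ?_⟩
  obtain ⟨h1, h2, hkpos⟩ := hk₀ k hk
  set t : ℕ := ⌈ρ ^ k⌉₊ with ht
  set D : ℕ := 2 * (2 * r) * t with hD
  have hρk : 1 ≤ ρ ^ k := one_le_pow₀ (by linarith)
  have htl : ρ ^ k ≤ t := Nat.le_ceil _
  have htu : (t : ℝ) ≤ 2 * ρ ^ k := by
    have := Nat.ceil_lt_add_one (show 0 ≤ ρ ^ k by linarith)
    linarith
  have htpos : 0 < t := by
    have : (0 : ℝ) < t := by linarith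
    exact_mod_cast this
  have hDr : (D : ℝ) = 4 * r * t := by
    rw [hD]
    push_cast
    ring
  have hDsq : (D : ℝ) ^ 2 ≤ (4 + ε) ^ k := by
    rw [div_pow, le_div_iff₀ (by positivity)] at h1
    calc (D : ℝ) ^ 2 ≤ (4 * r * (2 * ρ ^ k)) ^ 2 := by rw [hDr]; gcongr
      _ = 64 * r ^ 2 * (ρ ^ 2) ^ k := by rw [← pow_mul, mul_comm 2 k, pow_mul]; ring
      _ ≤ (4 + ε) ^ k := h1
  refine le_trans ?_ hDsq
  have hlogpos : 0 ≤ Real.log (4 + ε) := Real.log_nonneg (by linarith)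
  have hlog : Real.log ((D : ℝ) ^ 4 + 1) ≤ 3 * k * Real.log (4 + ε) := by
    have h3 : (D : ℝ) ^ 4 + 1 ≤ (4 + ε) ^ (3 * k) := by
      have h4 : (4 : ℝ) ≤ (4 + ε) ^ k := by
        calc (4 : ℝ) ≤ 4 + ε := by linarith
          _ ≤ (4 + ε) ^ k := le_self_pow₀ (by linarith) hkpos.ne'
      calc (D : ℝ) ^ 4 + 1 = ((D : ℝ) ^ 2) ^ 2 + 1 := by ring
        _ ≤ ((4 + ε) ^ k) ^ 2 + 1 := by gcongr
        _ ≤ ((4 + ε) ^ k) ^ 3 := by nlinarith [sq_nonneg ((4 + ε) ^ k)]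
        _ = (4 + ε) ^ (3 * k) := by rw [← pow_mul, mul_comm]
    calc Real.log ((D : ℝ) ^ 4 + 1) ≤ Real.log ((4 + ε) ^ (3 * k)) :=
          Real.log_le_log (by positivity) h3
      _ = 3 * k * Real.log (4 + ε) := by rw [Real.log_pow]; push_cast; ring
  have hmain : listRamsey (⊤ : SimpleGraph (Fin 3)) k ≤ D ^ 2 := by
    refine listRamsey_triangle_le_sq (r := r) (t := t) (by exact_mod_cast hr9) htpos hkpos hD ?_
    have hlamk : 0 < lam ^ k := by positivity
    have h5 : K * (k : ℝ) ^ 2 < lam ^ k := by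
      rwa [← mul_div_assoc, div_lt_one hlamk] at h2
    have hfrac0 : 0 ≤ ((r : ℝ) - 9) / (2 * r) := div_nonneg (by linarith) (by linarith)
    calc 12 * (2 * (r : ℝ)) ^ 4 * k * Real.log ((D : ℝ) ^ 4 + 1)
        ≤ 12 * (2 * (r : ℝ)) ^ 4 * k * (3 * k * Real.log (4 + ε)) := by gcongr
      _ = K * (k : ℝ) ^ 2 := by rw [hK]; ring
      _ < lam ^ k := h5
      _ = (((r : ℝ) - 9) / (2 * r)) ^ k * ρ ^ k := by rw [hlam, mul_pow, mul_comm]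
      _ ≤ (((r : ℝ) - 9) / (2 * r)) ^ k * D := by
        gcongr
        rw [hDr]
        nlinarith
  exact_mod_cast hmain
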